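/- Let n ≥ 3, let Γ be an access structure on n players satisfying monotonicity, no-cloning and no-redundancy, and let ψ be a pure QSS state for Γ. Then for every minimal authorized set A ∈ Γ_min and every subset B ⊆ A, we have S(B) = |B|·log 2; equivalently, the reduction of ψ to B equals 2^{−|B|}·I. -/

import Mathlib

open Finset

/-- Monotonicity of an access structure on `n` players (players = `Fin n`). -/
def Monotonic {n : ℕ} (Γ : Finset (Fin n) → Prop) : Prop :=
  ∀ A B : Finset (Fin n), Γ A → A ⊆ B → Γ B

/-- No-cloning: a set is authorized iff its complement is not. -/
def NoCloning {n : ℕ} (Γ : Finset (Fin n) → Prop) : Prop :=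
  ∀ A : Finset (Fin n), Γ A ↔ ¬ Γ Aᶜ

/-- `A` is a minimal authorized set of `Γ`. -/
def IsMinimal {n : ℕ} (Γ : Finset (Fin n) → Prop) (A : Finset (Fin n)) : Prop :=
  Γ A ∧ ∀ B : Finset (Fin n), B ⊂ A → ¬ Γ B

/-- No-redundancy: every player lies in some minimal authorized set. -/
def NoRedundancy {n : ℕ} (Γ : Finset (Fin n) → Prop) : Prop :=
  ∀ i : Fin n, ∃ A : Finset (Fin n), IsMinimal Γ A ∧ i ∈ A

noncomputable section

/-- Combine an assignment on `A` and one on `Aᶜ` into a full bit string. -/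
def glue {m : ℕ} (A : Finset (Fin m)) (u : {x // x ∈ A} → Fin 2)
    (w : {x // x ∈ Aᶜ} → Fin 2) : Fin m → Fin 2 :=
  fun x => if h : x ∈ A then u ⟨x, h⟩ else w ⟨x, Finset.mem_compl.mpr h⟩

/-- Reduced density matrix of the pure state `ψ` on the qubit positions in `A`:
the partial trace over the positions outside `A` of `ψψ†`. -/
def reducedDensity {m : ℕ} (ψ : (Fin m → Fin 2) → ℂ) (A : Finset (Fin m)) :
    Matrix ({x // x ∈ A} → Fin 2) ({x // x ∈ A} → Fin 2) ℂ :=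
  fun u v => ∑ w : {x // x ∈ Aᶜ} → Fin 2,
    ψ (glue A u w) * (starRingEnd ℂ) (ψ (glue A v w))

/-- The reduction of `ψ` to `A` is maximally mixed, i.e. equals `2^{-|A|} · I`. -/
def MaximallyMixed {m : ℕ} (ψ : (Fin m → Fin 2) → ℂ) (A : Finset (Fin m)) : Prop :=
  reducedDensity ψ A =
    ((2 : ℂ) ^ A.card)⁻¹ •
      (1 : Matrix ({x // x ∈ A} → Fin 2) ({x // x ∈ A} → Fin 2) ℂ)

open Classical in
/-- Von Neumann entropy (natural logarithm): sum of `-λ log λ` over the eigenvalues. -/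
def vnEntropy {ι : Type} [Fintype ι] [DecidableEq ι] (ρ : Matrix ι ι ℂ) : ℝ :=
  if h : ρ.IsHermitian then ∑ i, Real.negMulLog (h.eigenvalues i) else 0

/-- Entropy of the reduction of `ψ` to the set `A` of qubit positions. -/
def Sent {m : ℕ} (ψ : (Fin m → Fin 2) → ℂ) (A : Finset (Fin m)) : ℝ :=
  vnEntropy (reducedDensity ψ A)

/-- The qubit positions (in `{0,1,…,n} = Fin (n+1)`, where `0` is the reference qubit)
of a set of players `A ⊆ Fin n`: player `i` holds position `i.succ`. -/
def posOf {n : ℕ} (A : Finset (Fin n)) : Finset (Fin (n + 1)) := A.image Fin.succ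

/-- `ψ` is a pure QSS state for the access structure `Γ`: a normalized pure state of
`n+1` qubits (position `0` being the reference qubit `R`) satisfying Recoverability
`S(R) + S(A) - S(R ∪ A) = 2 log 2` for authorized `A` and Secrecy
`S(R) + S(B) - S(R ∪ B) = 0` for unauthorized `B`. -/
structure IsPureQSSState {n : ℕ} (Γ : Finset (Fin n) → Prop)
    (ψ : (Fin (n + 1) → Fin 2) → ℂ) : Prop where
  normalized : ∑ x : Fin (n + 1) → Fin 2, ‖ψ x‖ ^ 2 = 1
  recover : ∀ A : Finset (Fin n), Γ A →
    Sent ψ {0} + Sent ψ (posOf A) - Sent ψ (insert 0 (posOf A)) = 2 * Real.log 2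
  secrecy : ∀ B : Finset (Fin n), ¬ Γ B →
    Sent ψ {0} + Sent ψ (posOf B) - Sent ψ (insert 0 (posOf B)) = 0

end

/-!
Let `A` be minimal authorized and `i ∈ A`. Subtracting secrecy of `A \ {i}` from recoverability of
`A` gives `[S(A) - S(A \ {i})] + [S(R ∪ A \ {i}) - S(R ∪ A)] = 2 log 2`. Subadditivity bounds the
first bracket by `log 2`, and the Araki–Lieb inequality bounds the second one, so
`S(A) = S(A \ {i}) + log 2`. By the equality case of subadditivity, `ρ_A = ρ_{A \ {i}} ⊗ I / 2` for
every `i ∈ A`: all off-diagonal entries of `ρ_A` vanish, and its diagonal entries do not change when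
one bit is flipped. Hence `ρ_A` is maximally mixed, and so are its partial traces.

Subadditivity against a maximally mixed factor, with its equality case, is Jensen's inequality for
`η(t) = -t log t` used twice: the entropy of a matrix is at most that of its diagonal, and in an
eigenbasis of the marginal the diagonal of the marginal collects that of the full matrix.
-/

open Matrix
open scoped ComplexOrder Kronecker

section Jensen

variable {κ : Type*} [Fintype κ] [Nonempty κ] {a : κ → ℝ}

lemma card_mul_negMulLog_mean (s : ℝ) :
    (Fintype.card κ : ℝ) * Real.negMulLog ((Fintype.card κ : ℝ)⁻¹ * s) =
      Real.negMulLog s + s * Real.log (Fintype.card κ) := by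
  have hcard : (Fintype.card κ : ℝ) ≠ 0 := by simp
  rw [Real.negMulLog_mul, Real.negMulLog, Real.log_inv]
  field_simp
  ring

lemma sum_negMulLog_le (ha : ∀ e, 0 ≤ a e) :
    ∑ e, Real.negMulLog (a e) ≤
      Real.negMulLog (∑ e, a e) + (∑ e, a e) * Real.log (Fintype.card κ) := by
  have hcard : (0 : ℝ) < Fintype.card κ := by simp [Fintype.card_pos]
  have jensen := Real.concaveOn_negMulLog.le_map_sum (t := univ)
    (w := fun _ : κ => (Fintype.card κ : ℝ)⁻¹) (by simp) (by simp) (fun e _ => ha e)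
  simp only [smul_eq_mul, ← mul_sum] at jensen
  rwa [← card_mul_negMulLog_mean, ← inv_mul_le_iff₀ hcard]

lemma eq_card_inv_mul_sum_of_sum_negMulLog_eq (ha : ∀ e, 0 ≤ a e)
    (heq : ∑ e, Real.negMulLog (a e) =
      Real.negMulLog (∑ e, a e) + (∑ e, a e) * Real.log (Fintype.card κ)) (e : κ) :
    a e = (Fintype.card κ : ℝ)⁻¹ * ∑ e, a e := by
  have hcard : (Fintype.card κ : ℝ) ≠ 0 := by simp
  have jensen := Real.strictConcaveOn_negMulLog.map_sum_eq_iff (t := univ)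
    (w := fun _ : κ => (Fintype.card κ : ℝ)⁻¹) (by simp [Fintype.card_pos]) (by simp)
    (fun e _ => ha e)
  simp only [smul_eq_mul, ← mul_sum] at jensen
  refine jensen.1 ?_ e (mem_univ e)
  rw [heq, ← card_mul_negMulLog_mean, inv_mul_cancel_left₀ hcard]

end Jensen

section Spectral

variable {ι : Type*} {ρ : Matrix ι ι ℂ}

lemma re_apply_self_nonneg (hρ : ρ.PosSemidef) (i : ι) : 0 ≤ (ρ i i).re :=
  (Complex.le_def.1 hρ.diag_nonneg).1

variable [Fintype ι] [DecidableEq ι]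

lemma sum_norm_sq_row_unitaryGroup (U : unitaryGroup ι ℂ) (i : ι) : ∑ k, ‖U i k‖ ^ 2 = 1 := by
  have hrow := congrFun₂ (Unitary.coe_mul_star_self U) i i
  simp only [mul_apply, Unitary.coe_star, star_apply, one_apply_eq, Complex.star_def,
    Complex.mul_conj'] at hrow
  exact_mod_cast hrow

lemma sum_norm_sq_col_unitaryGroup (U : unitaryGroup ι ℂ) (k : ι) : ∑ i, ‖U i k‖ ^ 2 = 1 := by
  simpa using sum_norm_sq_row_unitaryGroup (star U) k

lemma apply_eq_sum_eigenvalues (hρ : ρ.IsHermitian) (i j : ι) :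
    ρ i j = ∑ k, hρ.eigenvectorUnitary i k * hρ.eigenvalues k *
      star (hρ.eigenvectorUnitary j k) := by
  conv_lhs => rw [hρ.spectral_theorem, Unitary.conjStarAlgAut_apply, mul_apply]
  simp only [mul_diagonal]
  rfl

lemma re_apply_self_eq_sum_eigenvalues (hρ : ρ.IsHermitian) (i : ι) :
    (ρ i i).re = ∑ k, ‖hρ.eigenvectorUnitary i k‖ ^ 2 • hρ.eigenvalues k := by
  rw [apply_eq_sum_eigenvalues hρ, Complex.re_sum]
  refine sum_congr rfl fun k _ => ?_
  rw [mul_right_comm, Complex.star_def, Complex.mul_conj']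
  norm_cast

lemma exists_unitary_isDiag_conj (hρ : ρ.IsHermitian) :
    ∃ U : Matrix ι ι ℂ, U * Uᴴ = 1 ∧ (Uᴴ * ρ * U).IsDiag := by
  refine ⟨hρ.eigenvectorUnitary, Unitary.coe_mul_star_self _, ?_⟩
  have hconj := hρ.conjStarAlgAut_star_eigenvectorUnitary
  rw [Unitary.conjStarAlgAut_star_apply, star_eq_conjTranspose] at hconj
  rw [hconj]
  exact isDiag_diagonal _

end Spectral

section Entropy

variable {ι κ : Type} [Fintype ι] [DecidableEq ι] [Fintype κ] [DecidableEq κ] {ρ : Matrix ι ι ℂ}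

lemma vnEntropy_eq_sum_roots_charpoly (hρ : ρ.IsHermitian) :
    vnEntropy ρ = (ρ.charpoly.roots.map fun z : ℂ => Real.negMulLog z.re).sum := by
  rw [vnEntropy, dif_pos hρ, hρ.roots_charpoly_eq_eigenvalues, Multiset.map_map]
  rfl

lemma vnEntropy_transpose (hρ : ρ.IsHermitian) : vnEntropy ρᵀ = vnEntropy ρ := by
  rw [vnEntropy_eq_sum_roots_charpoly hρ, vnEntropy_eq_sum_roots_charpoly hρ.transpose,
    charpoly_transpose]

lemma vnEntropy_submatrix_equiv (hρ : ρ.IsHermitian) (e : κ ≃ ι) :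
    vnEntropy (ρ.submatrix e e) = vnEntropy ρ := by
  rw [vnEntropy_eq_sum_roots_charpoly hρ, vnEntropy_eq_sum_roots_charpoly (hρ.submatrix e),
    ← charpoly_reindex e.symm ρ, reindex_apply, Equiv.symm_symm]

lemma vnEntropy_conjTranspose_mul_mul (hρ : ρ.IsHermitian) {V : Matrix ι ι ℂ} (hV : V * Vᴴ = 1) :
    vnEntropy (Vᴴ * ρ * V) = vnEntropy ρ := by
  rw [vnEntropy_eq_sum_roots_charpoly hρ,
    vnEntropy_eq_sum_roots_charpoly (isHermitian_conjTranspose_mul_mul V hρ),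
    charpoly_mul_comm, ← mul_assoc, hV, one_mul]

lemma vnEntropy_diagonal_ofReal (d : ι → ℝ) :
    vnEntropy (diagonal fun i => (d i : ℂ)) = ∑ i, Real.negMulLog (d i) := by
  have hd : (diagonal fun i => (d i : ℂ)).IsHermitian :=
    isHermitian_diagonal_of_self_adjoint _ (funext fun i => Complex.conj_ofReal (d i))
  rw [vnEntropy_eq_sum_roots_charpoly hd, charpoly_diagonal, Polynomial.roots_prod _ _
    (prod_ne_zero_iff.2 fun i _ => Polynomial.X_sub_C_ne_zero _)]
  simp

/-- `M * Mᴴ` and `Mᴴ * M` have the same nonzero eigenvalues, and `η(0) = 0`. -/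
lemma vnEntropy_mul_conjTranspose_self (M : Matrix ι κ ℂ) :
    vnEntropy (M * Mᴴ) = vnEntropy (Mᴴ * M) := by
  have hroots := congrArg Polynomial.roots (charpoly_mul_comm' M Mᴴ)
  have hne (N : ℕ) {p : Polynomial ℂ} (hp : p.Monic) : Polynomial.X ^ N * p ≠ 0 :=
    mul_ne_zero (pow_ne_zero _ Polynomial.X_ne_zero) hp.ne_zero
  rw [Polynomial.roots_mul (hne _ (charpoly_monic _)),
    Polynomial.roots_mul (hne _ (charpoly_monic _))] at hroots
  rw [vnEntropy_eq_sum_roots_charpoly (isHermitian_mul_conjTranspose_self M),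
    vnEntropy_eq_sum_roots_charpoly (isHermitian_conjTranspose_mul_self M)]
  simpa [Multiset.map_nsmul, Multiset.sum_nsmul] using
    congrArg (fun s => (s.map fun z : ℂ => Real.negMulLog z.re).sum) hroots

lemma vnEntropy_eq_sum_sum_norm_sq (hρ : ρ.IsHermitian) :
    vnEntropy ρ = ∑ i, ∑ k, ‖hρ.eigenvectorUnitary i k‖ ^ 2 •
      Real.negMulLog (hρ.eigenvalues k) := by
  rw [sum_comm, vnEntropy, dif_pos hρ]
  simp only [← sum_smul, sum_norm_sq_col_unitaryGroup, one_smul]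

lemma sum_norm_sq_smul_negMulLog_eigenvalues_le (hρ : ρ.PosSemidef) (i : ι) :
    ∑ k, ‖hρ.1.eigenvectorUnitary i k‖ ^ 2 • Real.negMulLog (hρ.1.eigenvalues k) ≤
      Real.negMulLog (ρ i i).re := by
  rw [re_apply_self_eq_sum_eigenvalues hρ.1]
  exact Real.concaveOn_negMulLog.le_map_sum (fun _ _ => by positivity)
    (sum_norm_sq_row_unitaryGroup _ i) fun k _ => hρ.eigenvalues_nonneg k

lemma vnEntropy_le_sum_negMulLog_diag (hρ : ρ.PosSemidef) :
    vnEntropy ρ ≤ ∑ i, Real.negMulLog (ρ i i).re := by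
  rw [vnEntropy_eq_sum_sum_norm_sq hρ.1]
  exact sum_le_sum fun i _ => sum_norm_sq_smul_negMulLog_eigenvalues_le hρ i

/-- Equality in Jensen forces every eigenvector meeting the `i`-th coordinate to have eigenvalue
`ρ i i`, so the `i`-th basis vector is itself an eigenvector. -/
lemma isDiag_of_vnEntropy_eq_sum_negMulLog_diag (hρ : ρ.PosSemidef)
    (heq : vnEntropy ρ = ∑ i, Real.negMulLog (ρ i i).re) : ρ.IsDiag := by
  intro i j hij
  set U := hρ.1.eigenvectorUnitary
  rw [vnEntropy_eq_sum_sum_norm_sq hρ.1, sum_eq_sum_iff_of_le fun i _ =>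
    sum_norm_sq_smul_negMulLog_eigenvalues_le hρ i] at heq
  have jensen_eq := (heq i (mem_univ i)).symm
  rw [re_apply_self_eq_sum_eigenvalues hρ.1, Real.strictConcaveOn_negMulLog.map_sum_eq_iff'
    (fun _ _ => by positivity) (sum_norm_sq_row_unitaryGroup U i)
    (fun k _ => hρ.eigenvalues_nonneg k), ← re_apply_self_eq_sum_eigenvalues hρ.1] at jensen_eq
  have eigenvalue_eq (k : ι) : U i k * hρ.1.eigenvalues k = (ρ i i).re * U i k := by
    by_cases hk : U i k = 0
    · rw [hk, zero_mul, mul_zero]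
    · rw [jensen_eq k (mem_univ k) (by simpa using hk), mul_comm]
  have rows_orthogonal : ∑ k, U i k * star (U j k) = 0 := by
    simpa only [mul_apply, Unitary.coe_star, star_apply, one_apply_ne hij] using
      congrFun₂ (Unitary.coe_mul_star_self U) i j
  calc ρ i j = ∑ k, (ρ i i).re * (U i k * star (U j k)) := by
        rw [apply_eq_sum_eigenvalues hρ.1]
        exact sum_congr rfl fun k _ => by rw [eigenvalue_eq, mul_assoc]
    _ = 0 := by rw [← mul_sum, rows_orthogonal, mul_zero]

end Entropy

/-- The partial trace over the second tensor factor of a matrix on a bipartite system, whose basis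
is indexed by pairs. -/
def partialTraceSnd {ι κ R : Type*} [Fintype κ] [AddCommMonoid R]
    (M : Matrix (ι × κ) (ι × κ) R) : Matrix ι ι R :=
  of fun i j => ∑ e, M (i, e) (j, e)

section PartialTrace

variable {ι κ R : Type*} [Fintype κ]

lemma trace_partialTraceSnd [Fintype ι] [AddCommMonoid R] (M : Matrix (ι × κ) (ι × κ) R) :
    (partialTraceSnd M).trace = M.trace := by
  simp [partialTraceSnd, trace, Fintype.sum_prod_type]

lemma partialTraceSnd_smul_one [DecidableEq ι] [DecidableEq κ] [Semiring R] (c : R) :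
    partialTraceSnd (c • (1 : Matrix (ι × κ) (ι × κ) R)) = ((Fintype.card κ : R) * c) • 1 := by
  ext i j
  by_cases hij : i = j <;> simp [partialTraceSnd, one_apply, hij]

lemma partialTraceSnd_kronecker_one_mul_mul [Fintype ι] [DecidableEq κ] [CommSemiring R]
    (P Q : Matrix ι ι R) (M : Matrix (ι × κ) (ι × κ) R) :
    partialTraceSnd (P ⊗ₖ (1 : Matrix κ κ R) * M * Q ⊗ₖ (1 : Matrix κ κ R)) =
      P * partialTraceSnd M * Q := by
  ext i j
  simp only [partialTraceSnd, of_apply, mul_apply, kroneckerMap_apply, one_apply,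
    Fintype.sum_prod_type, mul_ite, mul_one, mul_zero, ite_mul, zero_mul, sum_ite_eq, sum_ite_eq',
    mem_univ, if_true, mul_sum, sum_mul]
  rw [sum_comm]
  exact sum_congr rfl fun l _ => sum_comm

lemma partialTraceSnd_conj_kronecker_one [Fintype ι] [DecidableEq κ] [CommSemiring R] [StarRing R]
    (U : Matrix ι ι R) (M : Matrix (ι × κ) (ι × κ) R) :
    partialTraceSnd ((U ⊗ₖ (1 : Matrix κ κ R))ᴴ * M * U ⊗ₖ (1 : Matrix κ κ R)) =
      Uᴴ * partialTraceSnd M * U := by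
  rw [conjTranspose_kronecker, conjTranspose_one, partialTraceSnd_kronecker_one_mul_mul]

lemma kronecker_one_mul_conjTranspose [Fintype ι] [DecidableEq ι] [DecidableEq κ]
    [CommSemiring R] [StarRing R] {U : Matrix ι ι R} (hU : U * Uᴴ = 1) :
    U ⊗ₖ (1 : Matrix κ κ R) * (U ⊗ₖ (1 : Matrix κ κ R))ᴴ = 1 := by
  rw [conjTranspose_kronecker, conjTranspose_one, ← mul_kronecker_mul, hU, one_mul,
    one_kronecker_one]

lemma trace_conjTranspose_mul_mul [Fintype ι] [DecidableEq ι] [CommSemiring R] [StarRing R]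
    {V : Matrix ι ι R} (hV : V * Vᴴ = 1) (M : Matrix ι ι R) :
    (Vᴴ * M * V).trace = M.trace := by
  rw [trace_mul_comm, ← mul_assoc, hV, one_mul]

lemma isHermitian_partialTraceSnd {M : Matrix (ι × κ) (ι × κ) ℂ} (hM : M.IsHermitian) :
    (partialTraceSnd M).IsHermitian := by
  ext i j
  simp only [conjTranspose_apply, partialTraceSnd, of_apply, star_sum, hM.apply]

lemma re_partialTraceSnd_apply_self (M : Matrix (ι × κ) (ι × κ) ℂ) (i : ι) :
    (partialTraceSnd M i i).re = ∑ e, (M (i, e) (i, e)).re := by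
  simp [partialTraceSnd]

end PartialTrace

section Subadditivity

variable {ι κ : Type} [Fintype ι] [DecidableEq ι] [Fintype κ] [DecidableEq κ]

lemma vnEntropy_add_trace_mul_log_of_isDiag {ρ : Matrix ι ι ℂ} (hρ : ρ.IsHermitian)
    (hdiag : ρ.IsDiag) (c : ℝ) :
    vnEntropy ρ + ρ.trace.re * c =
      ∑ i, (Real.negMulLog (ρ i i).re + (ρ i i).re * c) := by
  have hρ_eq : ρ = diagonal fun i => ((ρ i i).re : ℂ) := by
    conv_lhs => rw [← hdiag.diagonal_diag]
    exact congrArg diagonal (funext fun i => (hρ.coe_re_apply_self i).symm)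
  have hentropy : vnEntropy ρ = ∑ i, Real.negMulLog (ρ i i).re := by
    conv_lhs => rw [hρ_eq, vnEntropy_diagonal_ofReal]
  rw [hentropy, sum_add_distrib, ← sum_mul, trace, Complex.re_sum]
  rfl

lemma sum_negMulLog_diag_le {ι κ : Type*} [Fintype κ] [Nonempty κ]
    {M : Matrix (ι × κ) (ι × κ) ℂ} (hM : M.PosSemidef) (i : ι) :
    ∑ e, Real.negMulLog (M (i, e) (i, e)).re ≤ Real.negMulLog (partialTraceSnd M i i).re +
      (partialTraceSnd M i i).re * Real.log (Fintype.card κ) := by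
  rw [re_partialTraceSnd_apply_self]
  exact sum_negMulLog_le fun e => re_apply_self_nonneg hM (i, e)

variable [Nonempty κ] {M : Matrix (ι × κ) (ι × κ) ℂ}

lemma vnEntropy_le_of_isDiag_partialTraceSnd (hM : M.PosSemidef)
    (hdiag : (partialTraceSnd M).IsDiag) :
    vnEntropy M ≤
      vnEntropy (partialTraceSnd M) + M.trace.re * Real.log (Fintype.card κ) := by
  rw [← trace_partialTraceSnd, vnEntropy_add_trace_mul_log_of_isDiag
    (isHermitian_partialTraceSnd hM.1) hdiag]
  refine (vnEntropy_le_sum_negMulLog_diag hM).trans ?_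
  rw [Fintype.sum_prod_type]
  exact sum_le_sum fun i _ => sum_negMulLog_diag_le hM i

lemma eq_kronecker_of_isDiag_of_vnEntropy_eq (hM : M.PosSemidef)
    (hdiag : (partialTraceSnd M).IsDiag)
    (heq : vnEntropy M =
      vnEntropy (partialTraceSnd M) + M.trace.re * Real.log (Fintype.card κ)) :
    M = partialTraceSnd M ⊗ₖ ((Fintype.card κ : ℂ)⁻¹ • 1) := by
  have hdiag_le := vnEntropy_le_sum_negMulLog_diag hM
  have hsum_le := sum_le_sum fun i (_ : i ∈ univ) => sum_negMulLog_diag_le hM i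
  rw [← trace_partialTraceSnd, vnEntropy_add_trace_mul_log_of_isDiag
    (isHermitian_partialTraceSnd hM.1) hdiag] at heq
  rw [Fintype.sum_prod_type] at hdiag_le
  have hMdiag : M.IsDiag := by
    refine isDiag_of_vnEntropy_eq_sum_negMulLog_diag hM ?_
    rw [Fintype.sum_prod_type]
    exact hdiag_le.antisymm (heq ▸ hsum_le)
  have hrow := (sum_eq_sum_iff_of_le fun i _ => sum_negMulLog_diag_le hM i).1
    (hsum_le.antisymm (heq ▸ hdiag_le))
  have hentry (i : ι) (e : κ) :
      M (i, e) (i, e) = partialTraceSnd M i i * (Fintype.card κ : ℂ)⁻¹ := by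
    have huniform := eq_card_inv_mul_sum_of_sum_negMulLog_eq
      (fun e => re_apply_self_nonneg hM (i, e))
      (by rw [hrow i (mem_univ i), re_partialTraceSnd_apply_self]) e
    rw [← re_partialTraceSnd_apply_self, mul_comm] at huniform
    rw [← hM.1.coe_re_apply_self, ← (isHermitian_partialTraceSnd hM.1).coe_re_apply_self]
    simp [huniform]
  ext ⟨i, e⟩ ⟨j, f⟩
  by_cases hij : (i, e) = (j, f)
  · obtain ⟨rfl, rfl⟩ := Prod.mk.inj hij
    simp [hentry]
  · rw [hMdiag hij, (hdiag.kronecker (isDiag_smul_one κ _)) hij]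

/-- Conjugating the first factor by a unitary diagonalizing the marginal changes neither side. -/
lemma vnEntropy_le_partialTraceSnd_add (hM : M.PosSemidef) :
    vnEntropy M ≤
      vnEntropy (partialTraceSnd M) + M.trace.re * Real.log (Fintype.card κ) := by
  have hN := isHermitian_partialTraceSnd hM.1
  obtain ⟨U, hU, hdiag⟩ := exists_unitary_isDiag_conj hN
  have hV := kronecker_one_mul_conjTranspose (κ := κ) hU
  rw [← partialTraceSnd_conj_kronecker_one] at hdiag
  have hle := vnEntropy_le_of_isDiag_partialTraceSnd (hM.conjTranspose_mul_mul_same _) hdiag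
  rwa [partialTraceSnd_conj_kronecker_one, trace_conjTranspose_mul_mul hV,
    vnEntropy_conjTranspose_mul_mul hM.1 hV, vnEntropy_conjTranspose_mul_mul hN hU] at hle

lemma eq_kronecker_of_vnEntropy_eq (hM : M.PosSemidef)
    (heq : vnEntropy M =
      vnEntropy (partialTraceSnd M) + M.trace.re * Real.log (Fintype.card κ)) :
    M = partialTraceSnd M ⊗ₖ ((Fintype.card κ : ℂ)⁻¹ • 1) := by
  have hN := isHermitian_partialTraceSnd hM.1
  obtain ⟨U, hU, hdiag⟩ := exists_unitary_isDiag_conj hN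
  set V : Matrix (ι × κ) (ι × κ) ℂ := U ⊗ₖ 1 with hV_def
  have hV : V * Vᴴ = 1 := kronecker_one_mul_conjTranspose hU
  have hconj : Vᴴ * M * V = Vᴴ * partialTraceSnd M ⊗ₖ ((Fintype.card κ : ℂ)⁻¹ • 1) * V := by
    rw [← vnEntropy_conjTranspose_mul_mul hM.1 hV, ← vnEntropy_conjTranspose_mul_mul hN hU,
      ← trace_conjTranspose_mul_mul hV M, ← partialTraceSnd_conj_kronecker_one] at heq
    rw [← partialTraceSnd_conj_kronecker_one] at hdiag
    rw [eq_kronecker_of_isDiag_of_vnEntropy_eq (hM.conjTranspose_mul_mul_same V) hdiag heq,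
      partialTraceSnd_conj_kronecker_one, hV_def, conjTranspose_kronecker, conjTranspose_one,
      ← mul_kronecker_mul, ← mul_kronecker_mul, one_mul, mul_one]
  have cancel (X : Matrix (ι × κ) (ι × κ) ℂ) : V * (Vᴴ * X * V) * Vᴴ = X := by
    rw [← mul_assoc, ← mul_assoc, hV, one_mul, mul_assoc, hV, mul_one]
  calc M = V * (Vᴴ * M * V) * Vᴴ := (cancel M).symm
    _ = partialTraceSnd M ⊗ₖ ((Fintype.card κ : ℂ)⁻¹ • 1) := by rw [hconj, cancel]

end Subadditivity

section Restriction

variable {ι α : Type*} [DecidableEq ι] {s t : Finset ι}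

/-- A configuration on `t` is the same as a pair of configurations on `s ⊆ t` and on `t \ s`; this
identifies the Hilbert space of `t` with the tensor product of those of `s` and `t \ s`. -/
def restrictSplit (h : s ⊆ t) : (t → α) ≃ (s → α) × (↥(t \ s) → α) where
  toFun u := (restrict₂ (π := fun _ => α) h u, restrict₂ (π := fun _ => α) sdiff_subset u)
  invFun p i := if hi : i.1 ∈ s then p.1 ⟨i, hi⟩ else p.2 ⟨i, mem_sdiff.2 ⟨i.2, hi⟩⟩
  left_inv u := by
    ext i
    by_cases hi : i.1 ∈ s <;> simp [hi, restrict₂]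
  right_inv p := by
    ext i
    · simp [restrict₂]
    · simp [restrict₂, (mem_sdiff.1 i.2).2]

lemma restrictSplit_restrict (h : s ⊆ t) (x : ι → α) :
    restrictSplit h (t.restrict x) = (s.restrict x, (t \ s).restrict x) :=
  rfl

lemma updateFinset_restrictSplit_symm (h : s ⊆ t) (x : ι → α) (v : s → α) :
    Function.updateFinset x t ((restrictSplit h).symm (v, (t \ s).restrict x)) =
      Function.updateFinset x s v := by
  ext i
  by_cases hs : i ∈ s
  · simp [Function.updateFinset, restrictSplit, hs, h hs]
  · simp [Function.updateFinset, restrictSplit, hs]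

lemma eq_of_forall_update_eq {β : Type*} [Finite ι] {f : (ι → α) → β}
    (hf : ∀ i u c, f (Function.update u i c) = f u) (u v : ι → α) : f u = f v := by
  cases nonempty_fintype ι
  have hpiecewise (s : Finset ι) : f (s.piecewise v u) = f u := by
    induction s using Finset.induction_on with
    | empty => rw [piecewise_empty]
    | insert i s _ ih => rw [piecewise_insert, hf, ih]
  rw [← hpiecewise univ, piecewise_univ]

lemma card_finset_fun_fin_two (s : Finset ι) : Fintype.card (s → Fin 2) = 2 ^ #s := by
  simp

end Restriction

section ReducedDensity

variable {m : ℕ} (ψ : (Fin m → Fin 2) → ℂ) (A B : Finset (Fin m))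

lemma sum_glue {β : Type*} [AddCommMonoid β] (f : (Fin m → Fin 2) → β) (u : A → Fin 2) :
    ∑ w, f (glue A u w) = ∑ x with A.restrict x = u, f x := by
  refine sum_bij' (fun w _ => glue A u w) (fun x _ => (Aᶜ).restrict x) ?_ (by simp) ?_ ?_
    (fun _ _ => rfl)
  · intro w _
    simp only [mem_filter, mem_univ, true_and]
    ext i
    simp [glue]
  · intro w _
    ext i
    simp [glue, mem_compl.1 i.2]
  · intro x hx
    obtain rfl := (mem_filter.1 hx).2
    ext i
    simp [glue]

lemma reducedDensity_apply (u v : A → Fin 2) :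
    reducedDensity ψ A u v = ∑ x with A.restrict x = u,
      ψ x * starRingEnd ℂ (ψ (Function.updateFinset x A v)) := by
  rw [← sum_glue]
  refine sum_congr rfl fun w _ => ?_
  congr 3
  ext i
  by_cases hi : i ∈ A <;> simp [glue, Function.updateFinset, hi]

lemma reducedDensity_eq_mul_conjTranspose :
    reducedDensity ψ A = (of fun u w => ψ (glue A u w)) * (of fun u w => ψ (glue A u w))ᴴ := by
  ext u v
  simp [reducedDensity, mul_apply]

lemma reducedDensity_compl :
    reducedDensity ψ Aᶜ = ((of fun u w => ψ (glue A u w))ᴴ * of fun u w => ψ (glue A u w))ᵀ := by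
  let e : (↥Aᶜᶜ → Fin 2) ≃ (A → Fin 2) :=
    (Equiv.subtypeEquivRight (by simp)).arrowCongr (Equiv.refl _)
  have glue_compl (w : ↥Aᶜ → Fin 2) (u : ↥Aᶜᶜ → Fin 2) : glue Aᶜ w u = glue A (e u) w := by
    ext i
    by_cases hi : i ∈ A
    · rw [glue, glue, dif_neg (by simpa using hi), dif_pos hi]
      rfl
    · simp [glue, hi]
  ext w w'
  simp only [transpose_apply, mul_apply, conjTranspose_apply, of_apply]
  refine Fintype.sum_equiv e _ _ fun u => ?_
  rw [glue_compl, glue_compl, mul_comm]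
  rfl

lemma posSemidef_reducedDensity : (reducedDensity ψ A).PosSemidef := by
  rw [reducedDensity_eq_mul_conjTranspose]
  exact posSemidef_self_mul_conjTranspose _

lemma Sent_compl : Sent ψ Aᶜ = Sent ψ A := by
  rw [Sent, Sent, reducedDensity_compl, vnEntropy_transpose (isHermitian_conjTranspose_mul_self _),
    ← vnEntropy_mul_conjTranspose_self, reducedDensity_eq_mul_conjTranspose]

variable {ψ A B}

lemma trace_reducedDensity (hψ : ∑ x, ‖ψ x‖ ^ 2 = 1) : (reducedDensity ψ A).trace = 1 := by
  calc (reducedDensity ψ A).trace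
      = ∑ u, ∑ x with A.restrict x = u, ((‖ψ x‖ ^ 2 : ℝ) : ℂ) := by
        refine sum_congr rfl fun u _ => ?_
        rw [diag_apply, reducedDensity_apply]
        refine sum_congr rfl fun x hx => ?_
        obtain rfl := (mem_filter.1 hx).2
        simp [Complex.mul_conj']
    _ = 1 := by
        rw [sum_fiberwise, ← Complex.ofReal_sum, hψ, Complex.ofReal_one]

lemma reducedDensity_eq_partialTraceSnd (h : B ⊆ A) :
    reducedDensity ψ B = partialTraceSnd
      ((reducedDensity ψ A).submatrix (restrictSplit h).symm (restrictSplit h).symm) := by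
  ext u v
  simp only [partialTraceSnd, of_apply, submatrix_apply, reducedDensity_apply]
  rw [← sum_fiberwise _ (A \ B).restrict]
  refine sum_congr rfl fun w _ => ?_
  rw [filter_filter]
  refine sum_congr (filter_congr fun x _ => ?_) fun x hx => ?_
  · rw [Equiv.eq_symm_apply, restrictSplit_restrict, Prod.mk.injEq]
  · have hsplit := (mem_filter.1 hx).2
    rw [Equiv.eq_symm_apply, restrictSplit_restrict, Prod.mk.injEq] at hsplit
    rw [← hsplit.2, updateFinset_restrictSplit_symm]

lemma MaximallyMixed.mono (hA : MaximallyMixed ψ A) (h : B ⊆ A) : MaximallyMixed ψ B := by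
  have hsubmatrix (c : ℂ) : (c • (1 : Matrix (A → Fin 2) (A → Fin 2) ℂ)).submatrix
      (restrictSplit h).symm (restrictSplit h).symm = c • 1 := by
    rw [← submatrix_one_equiv (restrictSplit h).symm]
    rfl
  rw [MaximallyMixed, reducedDensity_eq_partialTraceSnd h, hA, hsubmatrix,
    partialTraceSnd_smul_one, card_finset_fun_fin_two, ← card_sdiff_add_card_eq_card h]
  rw [pow_add, mul_inv, Nat.cast_pow, Nat.cast_ofNat, mul_inv_cancel_left₀ (by simp)]

lemma MaximallyMixed.Sent_eq (hA : MaximallyMixed ψ A) : Sent ψ A = #A * Real.log 2 := by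
  have hdiag : reducedDensity ψ A = diagonal fun _ => (((2 ^ #A)⁻¹ : ℝ) : ℂ) := by
    rw [hA, smul_one_eq_diagonal]
    push_cast
    rfl
  rw [Sent, hdiag, vnEntropy_diagonal_ofReal]
  simp [Real.negMulLog]

lemma trace_mul_log_card_sdiff (hψ : ∑ x, ‖ψ x‖ ^ 2 = 1) (h : B ⊆ A) :
    ((reducedDensity ψ A).submatrix (restrictSplit h).symm (restrictSplit h).symm).trace.re *
      Real.log (Fintype.card (↥(A \ B) → Fin 2)) = #(A \ B) * Real.log 2 := by
  rw [← trace_partialTraceSnd, ← reducedDensity_eq_partialTraceSnd, trace_reducedDensity hψ,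
    card_finset_fun_fin_two]
  simp

lemma Sent_le_Sent_add_card_sdiff (hψ : ∑ x, ‖ψ x‖ ^ 2 = 1) (h : B ⊆ A) :
    Sent ψ A ≤ Sent ψ B + #(A \ B) * Real.log 2 := by
  have hA := posSemidef_reducedDensity ψ A
  have hle := vnEntropy_le_partialTraceSnd_add (hA.submatrix (restrictSplit h).symm)
  rwa [← reducedDensity_eq_partialTraceSnd, vnEntropy_submatrix_equiv hA.1,
    trace_mul_log_card_sdiff hψ] at hle

/-- Purity turns this Araki–Lieb inequality into subadditivity on the complements. -/
lemma Sent_le_Sent_superset_add_card_sdiff (hψ : ∑ x, ‖ψ x‖ ^ 2 = 1) (h : B ⊆ A) :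
    Sent ψ B ≤ Sent ψ A + #(A \ B) * Real.log 2 := by
  have hle := Sent_le_Sent_add_card_sdiff hψ (compl_subset_compl.2 h)
  rwa [Sent_compl, Sent_compl, compl_sdiff_compl] at hle

lemma reducedDensity_eq_kronecker (hψ : ∑ x, ‖ψ x‖ ^ 2 = 1) (h : B ⊆ A)
    (heq : Sent ψ A = Sent ψ B + #(A \ B) * Real.log 2) :
    reducedDensity ψ A = (reducedDensity ψ B ⊗ₖ (((2 : ℂ) ^ #(A \ B))⁻¹ • 1)).submatrix
      (restrictSplit h) (restrictSplit h) := by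
  have hA := posSemidef_reducedDensity ψ A
  have hkronecker := eq_kronecker_of_vnEntropy_eq (hA.submatrix (restrictSplit h).symm) <| by
    rwa [← reducedDensity_eq_partialTraceSnd, vnEntropy_submatrix_equiv hA.1,
      trace_mul_log_card_sdiff hψ]
  rw [← reducedDensity_eq_partialTraceSnd, card_finset_fun_fin_two, Nat.cast_pow,
    Nat.cast_ofNat] at hkronecker
  calc reducedDensity ψ A
      = ((reducedDensity ψ A).submatrix (restrictSplit h).symm (restrictSplit h).symm).submatrix
          (restrictSplit h) (restrictSplit h) := by simp
    _ = _ := by rw [hkronecker]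

lemma reducedDensity_apply_eq_zero (hψ : ∑ x, ‖ψ x‖ ^ 2 = 1) (h : B ⊆ A)
    (heq : Sent ψ A = Sent ψ B + #(A \ B) * Real.log 2) {i : A} (hi : ↑i ∉ B)
    {u v : A → Fin 2} (huv : u i ≠ v i) : reducedDensity ψ A u v = 0 := by
  have hne : (restrictSplit h u).2 ≠ (restrictSplit h v).2 := fun hsnd =>
    huv (congrFun hsnd ⟨i, mem_sdiff.2 ⟨i.2, hi⟩⟩)
  rw [reducedDensity_eq_kronecker hψ h heq]
  simp [one_apply_ne hne]

lemma reducedDensity_update_self (hψ : ∑ x, ‖ψ x‖ ^ 2 = 1) (h : B ⊆ A)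
    (heq : Sent ψ A = Sent ψ B + #(A \ B) * Real.log 2) {i : A} (hi : ↑i ∉ B)
    (u : A → Fin 2) (c : Fin 2) :
    reducedDensity ψ A (Function.update u i c) (Function.update u i c) =
      reducedDensity ψ A u u := by
  have hfst : (restrictSplit h (Function.update u i c)).1 = (restrictSplit h u).1 := by
    ext j
    have hji : (⟨j, h j.2⟩ : A) ≠ i := fun hji => hi (hji ▸ j.2)
    simp [restrictSplit, restrict₂, hji]
  rw [reducedDensity_eq_kronecker hψ h heq]
  simp [hfst]

lemma maximallyMixed_of_isDiag_of_diag_const (hψ : ∑ x, ‖ψ x‖ ^ 2 = 1)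
    (hdiag : (reducedDensity ψ A).IsDiag)
    (hconst : ∀ u v, reducedDensity ψ A u u = reducedDensity ψ A v v) : MaximallyMixed ψ A := by
  have hentry (u : A → Fin 2) : reducedDensity ψ A u u = ((2 : ℂ) ^ #A)⁻¹ := by
    refine eq_inv_of_mul_eq_one_right ?_
    have htrace : ∑ v, reducedDensity ψ A v v = 1 := trace_reducedDensity hψ
    rwa [Fintype.sum_congr _ _ fun v => hconst v u, sum_const, card_univ,
      card_finset_fun_fin_two, nsmul_eq_mul, Nat.cast_pow, Nat.cast_ofNat] at htrace
  rw [MaximallyMixed, smul_one_eq_diagonal, ← hdiag.diagonal_diag]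
  exact congrArg diagonal (funext hentry)

lemma maximallyMixed_of_forall_Sent_erase (hψ : ∑ x, ‖ψ x‖ ^ 2 = 1)
    (hA : ∀ i ∈ A, Sent ψ A = Sent ψ (A.erase i) + Real.log 2) : MaximallyMixed ψ A := by
  have heq (i : A) : Sent ψ A = Sent ψ (A.erase i) + #(A \ A.erase i) * Real.log 2 := by
    simpa [sdiff_erase_self i.2] using hA i i.2
  refine maximallyMixed_of_isDiag_of_diag_const hψ (fun u v huv => ?_)
    (eq_of_forall_update_eq fun i u c => ?_)
  · obtain ⟨i, hi⟩ := Function.ne_iff.1 huv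
    exact reducedDensity_apply_eq_zero hψ (erase_subset _ _) (heq i) (notMem_erase _ _) hi
  · exact reducedDensity_update_self hψ (erase_subset _ _) (heq i) (notMem_erase _ _) u c

end ReducedDensity

section QuantumSecretSharing

variable {n : ℕ} {Γ : Finset (Fin n) → Prop} {ψ : (Fin (n + 1) → Fin 2) → ℂ} {A : Finset (Fin n)}

lemma posOf_erase (i : Fin n) : posOf (A.erase i) = (posOf A).erase i.succ :=
  image_erase (Fin.succ_injective n) A i

lemma insert_zero_sdiff_erase {i : Fin n} (hi : i ∈ A) :
    insert 0 (posOf A) \ insert 0 ((posOf A).erase i.succ) = {i.succ} := by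
  have hmem : i.succ ∈ insert 0 (posOf A) := mem_insert_of_mem (mem_image_of_mem _ hi)
  rw [← erase_insert_of_ne (Fin.succ_ne_zero i).symm, sdiff_erase_self hmem]

lemma IsPureQSSState.Sent_posOf_eq (hψ : IsPureQSSState Γ ψ) (hA : IsMinimal Γ A) {i : Fin n}
    (hi : i ∈ A) : Sent ψ (posOf A) = Sent ψ ((posOf A).erase i.succ) + Real.log 2 := by
  have hmem : i.succ ∈ posOf A := mem_image_of_mem _ hi
  have hrecover := hψ.recover A hA.1
  have hsecrecy := hψ.secrecy (A.erase i) (hA.2 _ (erase_ssubset hi))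
  rw [posOf_erase] at hsecrecy
  have hsubadd := Sent_le_Sent_add_card_sdiff hψ.normalized (erase_subset i.succ (posOf A))
  have harakiLieb := Sent_le_Sent_superset_add_card_sdiff hψ.normalized
    (insert_subset_insert 0 (erase_subset i.succ (posOf A)))
  rw [sdiff_erase_self hmem, card_singleton, Nat.cast_one, one_mul] at hsubadd
  rw [insert_zero_sdiff_erase hi, card_singleton, Nat.cast_one, one_mul] at harakiLieb
  linarith

lemma IsPureQSSState.maximallyMixed_posOf (hψ : IsPureQSSState Γ ψ) (hA : IsMinimal Γ A) :
    MaximallyMixed ψ (posOf A) := by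
  refine maximallyMixed_of_forall_Sent_erase hψ.normalized fun j hj => ?_
  obtain ⟨i, hi, rfl⟩ := mem_image.1 hj
  exact hψ.Sent_posOf_eq hA hi

end QuantumSecretSharing

theorem stmt16_general {n : ℕ} {Γ : Finset (Fin n) → Prop} {ψ : (Fin (n + 1) → Fin 2) → ℂ}
    (hψ : IsPureQSSState Γ ψ) {A B : Finset (Fin n)} (hA : IsMinimal Γ A) (hB : B ⊆ A) :
    Sent ψ (posOf B) = (B.card : ℝ) * Real.log 2 ∧ MaximallyMixed ψ (posOf B) := by
  have hmixed := (hψ.maximallyMixed_posOf hA).mono (image_subset_image hB)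
  refine ⟨?_, hmixed⟩
  rw [← card_image_of_injective B (Fin.succ_injective n)]
  exact hmixed.Sent_eq

theorem stmt16 (n : ℕ) (hn : 3 ≤ n) (Γ : Finset (Fin n) → Prop)
    (hmono : Monotonic Γ) (hnc : NoCloning Γ) (hnr : NoRedundancy Γ)
    (ψ : (Fin (n + 1) → Fin 2) → ℂ) (hψ : IsPureQSSState Γ ψ) :
    ∀ A : Finset (Fin n), IsMinimal Γ A → ∀ B : Finset (Fin n), B ⊆ A →
      Sent ψ (posOf B) = (B.card : ℝ) * Real.log 2 ∧ MaximallyMixed ψ (posOf B) :=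
  fun _ hA _ hB => stmt16_general hψ hA hB
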